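/- Let G be a proper circular-arc graph on a finite vertex set V whose complement is not bipartite, and let H be any simple graph on the same vertex set V. If there is a permutation σ of V with N_H[v] = N_G[σ(v)] for every v ∈ V (i.e., N[G] = N[H] as hypergraphs with multiplicities), then H = G. -/

import Mathlib

/-!
Both `N_H[v] = N_G[σ v]` and the symmetry of `H` turn the claim into one about `G` alone: `σ v` lies
in `N[v]`, the relation `u ∈ N[σ v]` is symmetric in `u` and `v`, and one has to show that `σ v` is
a twin of `v`.

Order the vertices cyclically by the starting points of their arcs and unroll this cyclic order to
`ℤ` with period `m`. Let `F i` be the first index whose arc starts after the arc of `i` ends. Since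
the arcs are pairwise incomparable, `F` is monotone, and `i`, `j` are *near* (their unrolled arcs
meet) iff `i < F j` and `j < F i`. The vertices with indices in `[i, F i)` form a clique, so
`i + m ≤ F (F i)` would cover `G` by two cliques; as the complement is not bipartite,
`F (F i) < i + m`. Hence a vertex has at most one index near `i`, and `σ` lifts to a permutation `s`
of `ℤ` with `s i` near `i`. Call `j` *far* from `i` when `F i ≤ j` and `F j ≤ i + m`; such pairs
represent the non-adjacent pairs of vertices. Because `i` and `j` cannot jump across each other,
`j` is far from `i` iff `s⁻¹ j` is far from `s i`.

The indices far from `i` form an interval, which `s⁻¹` maps onto the interval of indices far from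
`s i`. Comparing the intersections of two consecutive intervals before and after applying `s⁻¹`
shows that `F (s i) - F i` does not increase with `i`; being periodic, it is a constant `d`.
As `F i` is far from `i`, this gives `F i + d ≤ s⁻¹ (F i)`, while `F (s⁻¹ (F i)) = F (F i) - d`;
so `d ≤ 0` by monotonicity of `F`, and `d = 0` by symmetry. Thus `i` and `s i` have the same far
indices.
-/

open Set

/-- The closed neighborhood of a vertex: the vertex together with its neighbors. -/
def ClosedNbhd {V : Type*} (G : SimpleGraph V) (v : V) : Set V :=
  {u | u = v ∨ G.Adj u v}

/-- `S` is an interval (order-convex set) with respect to the order relation `r`. -/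
def IsIntervalWrt {α : Type*} (r : α → α → Prop) (S : Set α) : Prop :=
  ∀ x y z, r x y → r y z → x ∈ S → z ∈ S → y ∈ S

/-- A family of hyperedges forms an interval hypergraph: some linear order on the
vertices makes every hyperedge an interval (a set of consecutive elements). -/
def IsIntervalHypergraph {α ι : Type*} (H : ι → Set α) : Prop :=
  ∃ r : α → α → Prop, IsLinearOrder α r ∧ ∀ i, IsIntervalWrt r (H i)

/-- `S ⊆ ZMod n` is an arc: a set of (at most `n`) circularly consecutive points. -/
def IsArc (n : ℕ) (S : Set (ZMod n)) : Prop :=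
  ∃ a : ZMod n, ∃ k : ℕ, k ≤ n ∧ S = {x | ∃ i : ℕ, i < k ∧ x = a + (i : ZMod n)}

/-- Arcs `A` and `B` share their start point: some point is a start point of both. -/
def SharesStart (n : ℕ) (A B : Set (ZMod n)) : Prop :=
  ∃ a, a ∈ A ∧ a - 1 ∉ A ∧ a ∈ B ∧ a - 1 ∉ B

/-- Arcs `A` and `B` share their end point: some point is an end point of both. -/
def SharesEnd (n : ℕ) (A B : Set (ZMod n)) : Prop :=
  ∃ a, a ∈ A ∧ a + 1 ∉ A ∧ a ∈ B ∧ a + 1 ∉ B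

/-- `G` is a proper interval graph: it has an intersection model consisting of
nonempty integer intervals that are pairwise incomparable under inclusion. -/
def IsProperIntervalGraph {V : Type*} (G : SimpleGraph V) : Prop :=
  ∃ l : V → Set ℤ,
    (∀ v, ∃ a b : ℤ, a ≤ b ∧ l v = Set.Icc a b) ∧
    (∀ u v, u ≠ v → ¬ l u ⊆ l v) ∧
    (∀ u v, u ≠ v → (G.Adj u v ↔ (l u ∩ l v).Nonempty))

/-- `G` is a circular-arc graph: it has an intersection model consisting of
nonempty arcs of some circle `ZMod n`. -/
def IsCAGraph {V : Type*} (G : SimpleGraph V) : Prop :=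
  ∃ n : ℕ, 0 < n ∧ ∃ l : V → Set (ZMod n),
    Function.Injective l ∧
    (∀ v, (l v).Nonempty ∧ IsArc n (l v)) ∧
    (∀ u v, u ≠ v → (G.Adj u v ↔ (l u ∩ l v).Nonempty))

/-- `G` is a proper circular-arc graph: it has an intersection model consisting of
nonempty arcs of some circle `ZMod n`, pairwise incomparable under inclusion. -/
def IsPCAGraph {V : Type*} (G : SimpleGraph V) : Prop :=
  ∃ n : ℕ, 0 < n ∧ ∃ l : V → Set (ZMod n),
    Function.Injective l ∧
    (∀ v, (l v).Nonempty ∧ IsArc n (l v)) ∧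
    (∀ u v, u ≠ v → ¬ l u ⊆ l v) ∧
    (∀ u v, u ≠ v → (G.Adj u v ↔ (l u ∩ l v).Nonempty))

/-- `G` is bipartite: the vertex set splits into two independent sets. -/
def IsBipartite {V : Type*} (G : SimpleGraph V) : Prop :=
  ∃ U : Set V, (∀ u ∈ U, ∀ v ∈ U, ¬ G.Adj u v) ∧ (∀ u ∉ U, ∀ v ∉ U, ¬ G.Adj u v)

open scoped AddConstMap

section ClosedNbhd

variable {V : Type*} {G : SimpleGraph V} {u v : V}

theorem mem_closedNbhd_self (G : SimpleGraph V) (v : V) : v ∈ ClosedNbhd G v :=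
  Or.inl rfl

theorem mem_closedNbhd_comm : u ∈ ClosedNbhd G v ↔ v ∈ ClosedNbhd G u :=
  or_congr eq_comm (G.adj_comm u v)

theorem closedNbhd_injective :
    Function.Injective (ClosedNbhd : SimpleGraph V → V → Set V) := by
  intro G H h
  ext u v
  by_cases huv : u = v
  · simp [huv]
  · simpa [ClosedNbhd, huv] using Set.ext_iff.1 (congrFun h v) u

theorem isBipartite_compl_of_isClique {U : Set V} (hU : G.IsClique U) (hU' : G.IsClique Uᶜ) :
    IsBipartite Gᶜ :=
  ⟨U, fun _ hu _ hv h => h.2 (hU hu hv h.1), fun _ hu _ hv h => h.2 (hU' hu hv h.1)⟩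

end ClosedNbhd

/-! ### Periodic maps of the integers -/

theorem eq_of_antitone_of_periodic {α β : Type*} [AddCommGroup α] [LinearOrder α]
    [IsOrderedAddMonoid α] [Archimedean α] [PartialOrder β] {f : α → β} {c : α} (hc : 0 < c)
    (hf : Antitone f) (hper : Function.Periodic f c) (x y : α) : f x = f y := by
  have le (x y : α) : f y ≤ f x := by
    obtain ⟨z, hz, hyz⟩ := hper.exists_mem_Ico hc y x
    exact hyz.trans_le (hf hz.1)
  exact le_antisymm (le y x) (le x y)

theorem sub_eq_sub_of_image_Icc_eq_Icc {f : ℤ → ℤ} (hf : Function.Injective f) {a b c d : ℤ}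
    (hab : a ≤ b) (h : f '' Icc a b = Icc c d) : d - c = b - a := by
  have hcard : (Icc c d).ncard = (Icc a b).ncard := by rw [← h, ncard_image_of_injective _ hf]
  simp only [← Finset.coe_Icc, ncard_coe_finset, Int.card_Icc] at hcard
  lia

section AddConstMap

variable {m n : ℤ}

theorem apply_add_mul (f : ℤ →+c[m, n] ℤ) (i q : ℤ) : f (i + q * m) = f i + q * n := by
  simpa only [smul_eq_mul] using AddConstMapClass.map_add_zsmul f i q

theorem exists_apply_mem_Ioc (hn : 0 < n) (f : ℤ →+c[m, n] ℤ) (x : ℤ) :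
    ∃ j, f j ∈ Ioc x (x + n) := by
  obtain ⟨k, hk, -⟩ := existsUnique_sub_zsmul_mem_Ioc hn (f 0) x
  exact ⟨0 - k • m, by rwa [AddConstMapClass.map_sub_zsmul]⟩

theorem exists_galoisConnection (hn : 0 < n) {f : ℤ →+c[m, n] ℤ} (hf : Monotone f) :
    ∃ g : ℤ →+c[n, m] ℤ, GaloisConnection f g := by
  have hne (x : ℤ) : {j | f j ≤ x}.Nonempty := by
    obtain ⟨j, hj⟩ := exists_apply_mem_Ioc hn f (x - n)
    exact ⟨j, hj.2.trans_eq (sub_add_cancel x n)⟩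
  have hbdd (x : ℤ) : BddAbove {j | f j ≤ x} := by
    obtain ⟨b, hb⟩ := exists_apply_mem_Ioc hn f x
    exact ⟨b, fun j hj => (hf.reflect_lt (lt_of_le_of_lt hj hb.1)).le⟩
  obtain ⟨g, gc⟩ : ∃ g : ℤ → ℤ, GaloisConnection f g :=
    ⟨fun x => sSup {j | f j ≤ x}, fun _ x =>
      ⟨fun hj => le_csSup (hbdd x) hj, fun hj => (hf hj).trans (Int.csSup_mem (hne x) (hbdd x))⟩⟩
  refine ⟨⟨g, fun x => eq_of_forall_le_iff fun j => ?_⟩, gc⟩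
  rw [← gc, ← sub_le_iff_le_add (a := j), ← gc, AddConstMapClass.map_sub_const, sub_le_iff_le_add]

theorem exists_forall_lt_apply_iff (hn : 0 < n) {p : ℤ →+c[m, n] ℤ} (hp : Monotone p)
    (e : ℤ →+c[m, n] ℤ) : ∃ F : ℤ →+c[m, m] ℤ, ∀ i j, j < F i ↔ p j < e i := by
  obtain ⟨g, gc⟩ := exists_galoisConnection hn hp
  refine ⟨⟨fun i => g (e i - 1) + 1, fun i => ?_⟩, fun i j => ?_⟩
  · rw [AddConstMapClass.map_add_const, add_sub_right_comm, AddConstMapClass.map_add_const,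
      add_right_comm]
  · rw [AddConstMap.coe_mk, Int.lt_add_one_iff, ← gc, Int.le_sub_one_iff]

theorem modEq_apply_iff {p : ℤ →+c[m, n] ℤ} (hp : Function.Injective p) {i j : ℤ} :
    p i ≡ p j [ZMOD n] ↔ i ≡ j [ZMOD m] := by
  simp only [Int.modEq_iff_add_fac, mul_comm m, mul_comm n, ← apply_add_mul, hp.eq_iff]

end AddConstMap

section Enumeration

theorem orderIso_int_apply (g : ℤ ≃o ℤ) (i : ℤ) : g i = i + g 0 := by
  have hsucc (i : ℤ) : g (i + 1) = g i + 1 := g.map_succ i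
  induction i with
  | zero => simp
  | succ k ih => rw [hsucc, ih, add_right_comm]
  | pred k ih =>
    have := hsucc (-k - 1)
    rw [sub_add_cancel, ih] at this
    lia

theorem nonempty_orderIso_int (P : Set ℤ) [Nonempty P] [NoMaxOrder P] [NoMinOrder P] :
    Nonempty (ℤ ≃o P) := by
  classical
  let : LocallyFiniteOrder P := Subtype.instLocallyFiniteOrder (· ∈ P)
  let : SuccOrder P := LinearLocallyFiniteOrder.succOrder P
  let : PredOrder P := LinearLocallyFiniteOrder.predOrder P
  exact ⟨orderIsoIntOfLinearSuccPredArch.symm⟩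

theorem exists_strictMono_range_eq {P : Set ℤ} {n : ℤ} (hn : 0 < n) (hne : P.Nonempty)
    (hP : ∀ x, x ∈ P ↔ x + n ∈ P) :
    ∃ m, 0 < m ∧ ∃ p : ℤ →+c[m, n] ℤ, StrictMono p ∧ range p = P := by
  let T : P ≃o P :=
    { toEquiv := (Equiv.addRight n).subtypeEquiv hP
      map_rel_iff' := add_le_add_iff_right n }
  have hT (x : P) : (T x : ℤ) = x + n := rfl
  have hT' (x : P) : x < T x := by simpa [← Subtype.coe_lt_coe, hT] using hn
  have : Nonempty P := hne.to_subtype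
  have : NoMaxOrder P := ⟨fun x => ⟨T x, hT' x⟩⟩
  have : NoMinOrder P := ⟨fun x => ⟨T.symm x, by simpa using hT' (T.symm x)⟩⟩
  obtain ⟨φ⟩ := nonempty_orderIso_int P
  let g : ℤ ≃o ℤ := (φ.trans T).trans φ.symm
  have hg (i : ℤ) : (φ (g i) : ℤ) = φ i + n := by simp [g, hT]
  refine ⟨g 0, ?_, ⟨fun i => φ i, fun i => by rw [← orderIso_int_apply, hg]⟩, fun i j hij => ?_, ?_⟩
  · rw [← φ.lt_iff_lt, ← Subtype.coe_lt_coe, hg]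
    lia
  · exact Subtype.coe_lt_coe.2 (φ.strictMono hij)
  · exact (range_comp Subtype.val φ).trans (by simp [φ.range_eq])

end Enumeration

/-! ### Near and far indices -/

/-- Adjacency or equality of indices in the unrolled cyclic order, when `F i` is the first index
past the clockwise neighbors of `i`. -/
def Near (F : ℤ → ℤ) (i j : ℤ) : Prop := i < F j ∧ j < F i

/-- Non-adjacency of indices in the unrolled cyclic order: `j` lies past the clockwise neighbors of
`i` and before the counterclockwise neighbors of the next copy `i + m` of `i`. -/
def Far {m : ℤ} (F : ℤ →+c[m, m] ℤ) (i j : ℤ) : Prop := F i ≤ j ∧ F j ≤ i + m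

section NearFar

theorem near_comm {F : ℤ → ℤ} {i j : ℤ} : Near F i j ↔ Near F j i :=
  and_comm

variable {m : ℤ} {F : ℤ →+c[m, m] ℤ} {i i' j j' : ℤ}

theorem near_add_const : Near F (i + m) (j + m) ↔ Near F i j := by
  simp [Near, AddConstMapClass.map_add_const]

theorem near_of_mem_Ico (hmono : Monotone F) (hj : j ∈ Ico i (F i)) (hj' : j' ∈ Ico i (F i)) :
    Near F j j' :=
  ⟨hj.2.trans_le (hmono hj'.1), hj'.2.trans_le (hmono hj.1)⟩

theorem Near.lt_add (hmono : Monotone F) (hF : ∀ i, F (F i) < i + m) (h : Near F i j)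
    (h' : Near F i j') : j' < j + m :=
  calc
    j' < F i := h'.2
    _ ≤ F (F j) := hmono h.1.le
    _ < j + m := hF j

theorem Far.lt_of_near (h : Far F i j) (h' : Near F i j') : j' < j :=
  h'.2.trans_le h.1

theorem Far.lt_add_of_near (hmono : Monotone F) (h : Far F i j) (h' : Near F i j') :
    j < j' + m := by
  refine hmono.reflect_lt (h.2.trans_lt ?_)
  rw [AddConstMapClass.map_add_const]
  exact add_lt_add_left h'.1 m

theorem apply_le_of_not_near (hlt : ∀ i, i < F i) (hij : i ≤ j) (h : ¬ Near F i j) : F i ≤ j :=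
  not_lt.1 fun hj => h ⟨hij.trans_lt (hlt j), hj⟩

theorem apply_le_of_near_of_not_near (hmono : Monotone F) (hlt : ∀ i, i < F i) (h : F i ≤ j)
    (hi : Near F i i') (hj : Near F j j') (h' : ¬ Near F i' j') : F i' ≤ j' := by
  refine apply_le_of_not_near hlt (not_lt.1 fun hji => h' ⟨?_, hji.trans (hlt i')⟩) h'
  have hij' : i < j' := hmono.reflect_lt (h.trans_lt hj.1)
  exact hi.2.trans_le (hmono hij'.le)

theorem Far.of_near (hmono : Monotone F) (hlt : ∀ i, i < F i) (h : Far F i j) (hi : Near F i i')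
    (hj : Near F j j') (h₁ : ¬ Near F i' j') (h₂ : ¬ Near F j' (i' + m)) : Far F i' j' :=
  ⟨apply_le_of_near_of_not_near hmono hlt h.1 hi hj h₁,
    apply_le_of_near_of_not_near hmono hlt h.2 hj (near_add_const.2 hi) h₂⟩

end NearFar

/-! ### Rigidity -/

/-- The pair `(s, s⁻¹)` maps far pairs onto far pairs. This is what remains on indices of the
symmetry of `u ∈ N[σ v]` in `u` and `v`. -/
def PreservesFar {m : ℤ} (F : ℤ →+c[m, m] ℤ) (s : ℤ ≃+c[m, m] ℤ) : Prop :=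
  ∀ i j, Far F (s i) (s.symm j) ↔ Far F i j

section Rigidity

variable {m : ℤ} {F : ℤ →+c[m, m] ℤ} {E : ℤ → ℤ} {s : ℤ ≃+c[m, m] ℤ}

theorem setOf_far_eq_Icc (gc : GaloisConnection F E) (i : ℤ) :
    {x | Far F i x} = Icc (F i) (E (i + m)) :=
  Set.ext fun x => and_congr_right' (gc x (i + m))

theorem setOf_far_inter_setOf_far (gc : GaloisConnection F E) (i j : ℤ) :
    {x | Far F i x} ∩ {x | Far F j x} = Icc (F (max i j)) (E (min i j + m)) := by
  rw [setOf_far_eq_Icc gc, setOf_far_eq_Icc gc, Icc_inter_Icc, ← gc.monotone_l.map_sup,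
    ← gc.monotone_u.map_inf, min_add_add_right]

namespace PreservesFar

theorem symm (hs : PreservesFar F s) : PreservesFar F s.symm := fun i j => by
  simpa using (hs (s.symm i) (s j)).symm

theorem image_symm_setOf_far (hs : PreservesFar F s) (i : ℤ) :
    s.symm '' {x | Far F i x} = {x | Far F (s i) x} := by
  ext x
  constructor
  · rintro ⟨y, hy, rfl⟩
    exact (hs i y).2 hy
  · exact fun hx => ⟨s x, (hs i (s x)).1 (by simpa using hx), by simp⟩

theorem sub_eq_sub (gc : GaloisConnection F E) (hs : PreservesFar F s) {i j : ℤ}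
    (hij : F (max i j) ≤ E (min i j + m)) :
    E (min (s i) (s j) + m) - F (max (s i) (s j)) = E (min i j + m) - F (max i j) := by
  refine sub_eq_sub_of_image_Icc_eq_Icc s.symm.injective hij ?_
  rw [← setOf_far_inter_setOf_far gc, ← setOf_far_inter_setOf_far gc,
    image_inter s.symm.injective, AddConstEquiv.coe_toEquiv,
    hs.image_symm_setOf_far, hs.image_symm_setOf_far]

theorem length_eq (gc : GaloisConnection F E) (hF : ∀ i, F (F i) < i + m)
    (hs : PreservesFar F s) (i : ℤ) : E (s i + m) - F (s i) = E (i + m) - F i := by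
  simpa using hs.sub_eq_sub gc (i := i) (j := i) (by simpa using gc.le_u (hF i).le)

theorem antitone_sub (gc : GaloisConnection F E) (hF : ∀ i, F (F i) < i + m)
    (hs : PreservesFar F s) : Antitone fun i => F (s i) - F i := by
  refine antitone_int_of_succ_le fun i => ?_
  have hmax : max i (i + 1) = i + 1 := max_eq_right (by lia)
  have hmin : min i (i + 1) = i := min_eq_left (by lia)
  have hmeet := hs.sub_eq_sub gc (i := i) (j := i + 1) <| by
    rw [hmax, hmin]
    exact gc.le_u (by have := hF (i + 1); lia)
  rw [hmax, hmin] at hmeet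
  have hlength := hs.length_eq gc hF i
  have hl : F (s (i + 1)) ≤ F (max (s i) (s (i + 1))) := gc.monotone_l (le_max_right _ _)
  have hu : E (min (s i) (s (i + 1)) + m) ≤ E (s i + m) :=
    gc.monotone_u (add_le_add_left (min_le_left _ _) m)
  lia

theorem nonpos_of_apply_eq_add (hmono : Monotone F) (hF : ∀ i, F (F i) < i + m)
    (hs : PreservesFar F s) {d : ℤ} (hd : ∀ i, F (s i) = F i + d) : d ≤ 0 := by
  by_contra! hpos
  have hle : F 0 + d ≤ s.symm (F 0) := hd 0 ▸ ((hs 0 (F 0)).2 ⟨le_rfl, (hF 0).le⟩).1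
  have hFle : F (F 0) ≤ F (s.symm (F 0)) := hmono (by lia)
  have := hd (s.symm (F 0))
  rw [AddConstEquiv.apply_symm_apply] at this
  lia

theorem apply_eq (hm : 0 < m) (hmono : Monotone F) (hF : ∀ i, F (F i) < i + m)
    (hs : PreservesFar F s) (i : ℤ) : F (s i) = F i := by
  obtain ⟨E, gc⟩ := exists_galoisConnection hm hmono
  have hper : Function.Periodic (fun i => F (s i) - F i) m := fun i => by
    simp [AddConstMapClass.map_add_const]
  obtain ⟨d, hd⟩ : ∃ d, ∀ i, F (s i) = F i + d := ⟨F (s 0) - F 0, fun i => by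
    rw [← eq_of_antitone_of_periodic hm (hs.antitone_sub gc hF) hper i 0, add_sub_cancel]⟩
  have hd' (i : ℤ) : F (s.symm i) = F i + -d := by
    rw [← sub_eq_add_neg, eq_sub_iff_add_eq, ← hd, AddConstEquiv.apply_symm_apply]
  have hd_nonpos := hs.nonpos_of_apply_eq_add hmono hF hd
  have hd_nonneg := hs.symm.nonpos_of_apply_eq_add hmono hF hd'
  rw [hd]
  lia

theorem far_apply_iff (hm : 0 < m) (hmono : Monotone F) (hF : ∀ i, F (F i) < i + m)
    (hs : PreservesFar F s) (i j : ℤ) : Far F (s i) j ↔ Far F i j := by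
  obtain ⟨E, gc⟩ := exists_galoisConnection hm hmono
  have hl : F (s i) = F i := hs.apply_eq hm hmono hF i
  have hu : E (s i + m) = E (i + m) := by
    have := hs.length_eq gc hF i
    lia
  change j ∈ {x | Far F (s i) x} ↔ j ∈ {x | Far F i x}
  rw [setOf_far_eq_Icc gc, setOf_far_eq_Icc gc, hl, hu]

end PreservesFar

end Rigidity

/-! ### Unrolled cyclic orders -/

/-- An unrolling to `ℤ`, with period `m`, of a cyclic order of the vertices of `G` in which closed
neighborhoods are described by a map `F`: the clockwise neighbors of the vertex with index `i` are
those with the other indices in `[i, F i)`. -/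
structure RoundLift {V : Type*} (G : SimpleGraph V) where
  /-- the period -/
  m : ℤ
  /-- the first index past the clockwise neighbors of an index -/
  F : ℤ →+c[m, m] ℤ
  /-- the vertex represented by an index -/
  vert : ℤ → V
  m_pos : 0 < m
  monotone : Monotone F
  lt_apply : ∀ i, i < F i
  vert_surjective : Function.Surjective vert
  vert_eq_iff : ∀ {i j}, vert i = vert j ↔ i ≡ j [ZMOD m]
  mem_closedNbhd_iff : ∀ {i v}, v ∈ ClosedNbhd G (vert i) ↔ ∃ j, vert j = v ∧ Near F i j

namespace RoundLift

variable {V : Type*} {G : SimpleGraph V} (L : RoundLift G) {i j j' : ℤ} {v : V}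

theorem vert_add_period (i : ℤ) : L.vert (i + L.m) = L.vert i :=
  L.vert_eq_iff.2 Int.add_modEq_right

theorem exists_mem_Ico_vert_eq (i : ℤ) (v : V) : ∃ j ∈ Ico i (i + L.m), L.vert j = v := by
  have hper : Function.Periodic L.vert L.m := L.vert_add_period
  obtain ⟨j, rfl⟩ := L.vert_surjective v
  obtain ⟨j', hj', h⟩ := hper.exists_mem_Ico L.m_pos j i
  exact ⟨j', hj', h.symm⟩

theorem eq_of_vert_eq (h : L.vert j = L.vert j') (hj : j < j' + L.m) (hj' : j' < j + L.m) :
    j = j' := by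
  have hdvd : L.m ∣ j - j' := (L.vert_eq_iff.1 h).symm.dvd
  have habs : |j - j'| < L.m := abs_sub_lt_iff.2 ⟨by lia, by lia⟩
  exact sub_eq_zero.1 (Int.eq_zero_of_abs_lt_dvd hdvd habs)

theorem eq_of_near (hF : ∀ i, L.F (L.F i) < i + L.m) (hj : Near L.F i j) (hj' : Near L.F i j')
    (h : L.vert j = L.vert j') : j = j' :=
  L.eq_of_vert_eq h (hj'.lt_add L.monotone hF hj) (hj.lt_add L.monotone hF hj')

theorem mem_closedNbhd_of_near (h : Near L.F i j) : L.vert j ∈ ClosedNbhd G (L.vert i) :=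
  L.mem_closedNbhd_iff.2 ⟨j, rfl, h⟩

theorem not_mem_closedNbhd_iff :
    v ∉ ClosedNbhd G (L.vert i) ↔ ∃ j, L.vert j = v ∧ Far L.F i j := by
  constructor
  · intro hv
    obtain ⟨j, hj, rfl⟩ := L.exists_mem_Ico_vert_eq i v
    refine ⟨j, rfl, apply_le_of_not_near L.lt_apply hj.1 (hv ∘ L.mem_closedNbhd_of_near),
      apply_le_of_not_near L.lt_apply hj.2.le fun h => hv ?_⟩
    rw [mem_closedNbhd_comm, ← L.vert_add_period i]
    exact L.mem_closedNbhd_of_near h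
  · rintro ⟨j, rfl, hj⟩ hv
    obtain ⟨j', h, hj'⟩ := L.mem_closedNbhd_iff.1 hv
    have hlt : j' < j := hj.lt_of_near hj'
    have heq : j = j' := L.eq_of_vert_eq h.symm (hj.lt_add_of_near L.monotone hj')
      (hlt.trans (lt_add_of_pos_right j L.m_pos))
    exact hlt.ne' heq

theorem isClique_image_Ico (i : ℤ) : G.IsClique (L.vert '' Ico i (L.F i)) := by
  rintro _ ⟨j, hj, rfl⟩ _ ⟨j', hj', rfl⟩ hne
  exact (L.mem_closedNbhd_of_near (near_of_mem_Ico L.monotone hj' hj)).resolve_left hne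

theorem isBipartite_compl (hi : i + L.m ≤ L.F (L.F i)) : IsBipartite Gᶜ := by
  refine isBipartite_compl_of_isClique (L.isClique_image_Ico i)
    ((L.isClique_image_Ico (L.F i)).subset fun v hv => ?_)
  obtain ⟨j, hj, rfl⟩ := L.exists_mem_Ico_vert_eq i v
  exact ⟨j, ⟨not_lt.1 fun h => hv ⟨j, ⟨hj.1, h⟩, rfl⟩, hj.2.trans_le hi⟩, rfl⟩

/-- `s` lifts the vertex permutation `σ` to indices, moving each index to a near one. -/
def IsLift (σ : Equiv.Perm V) (s : ℤ ≃+c[L.m, L.m] ℤ) : Prop :=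
  ∀ i, L.vert (s i) = σ (L.vert i) ∧ Near L.F i (s i)

variable {L} {σ : Equiv.Perm V} {s : ℤ ≃+c[L.m, L.m] ℤ}

theorem IsLift.symm (hs : L.IsLift σ s) : L.IsLift σ.symm s.symm := fun i => by
  obtain ⟨hvert, hnear⟩ := hs (s.symm i)
  rw [AddConstEquiv.apply_symm_apply] at hvert hnear
  exact ⟨by rw [hvert, Equiv.symm_apply_apply], near_comm.1 hnear⟩

theorem exists_isLift (hF : ∀ i, L.F (L.F i) < i + L.m) (hσ : ∀ v, v ∈ ClosedNbhd G (σ v)) :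
    ∃ s, L.IsLift σ s := by
  have hσ' (v : V) : σ.symm v ∈ ClosedNbhd G v := by simpa using hσ (σ.symm v)
  choose s hs hs_near using fun i => L.mem_closedNbhd_iff.1 (mem_closedNbhd_comm.1 (hσ (L.vert i)))
  choose t ht ht_near using fun i => L.mem_closedNbhd_iff.1 (hσ' (L.vert i))
  have hst (i : ℤ) : s (t i) = i :=
    L.eq_of_near hF (hs_near (t i)) (near_comm.1 (ht_near i)) (by simp [hs, ht])
  have hts (i : ℤ) : t (s i) = i :=
    L.eq_of_near hF (ht_near (s i)) (near_comm.1 (hs_near i)) (by simp [hs, ht])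
  have hs_add (i : ℤ) : s (i + L.m) = s i + L.m :=
    L.eq_of_near hF (hs_near (i + L.m)) (near_add_const.2 (hs_near i)) (by
      simp only [hs, L.vert_add_period])
  exact ⟨⟨⟨s, t, hts, hst⟩, hs_add⟩, fun i => ⟨hs i, hs_near i⟩⟩

theorem IsLift.far_apply (hs : L.IsLift σ s)
    (hσ : ∀ u v, u ∈ ClosedNbhd G (σ v) ↔ v ∈ ClosedNbhd G (σ u)) (h : Far L.F i j) :
    Far L.F (s i) (s.symm j) := by
  have hij : L.vert j ∉ ClosedNbhd G (L.vert i) := L.not_mem_closedNbhd_iff.2 ⟨j, rfl, h⟩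
  have hij' : L.vert (s.symm j) ∉ ClosedNbhd G (L.vert (s i)) := by
    rwa [(hs i).1, hσ, (hs.symm j).1, Equiv.apply_symm_apply, mem_closedNbhd_comm]
  refine h.of_near L.monotone L.lt_apply (hs i).2 (hs.symm j).2
    (hij' ∘ L.mem_closedNbhd_of_near) fun hnear => hij' ?_
  rw [mem_closedNbhd_comm, ← L.vert_add_period (s i)]
  exact L.mem_closedNbhd_of_near hnear

theorem IsLift.preservesFar (hs : L.IsLift σ s)
    (hσ : ∀ u v, u ∈ ClosedNbhd G (σ v) ↔ v ∈ ClosedNbhd G (σ u)) : PreservesFar L.F s := by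
  have hσ' (u v : V) : u ∈ ClosedNbhd G (σ.symm v) ↔ v ∈ ClosedNbhd G (σ.symm u) := by
    rw [mem_closedNbhd_comm, @mem_closedNbhd_comm _ _ v]
    simpa using hσ (σ.symm v) (σ.symm u)
  exact fun i j => ⟨fun h => by simpa using hs.symm.far_apply hσ' h, hs.far_apply hσ⟩

theorem closedNbhd_apply_eq (hF : ∀ i, L.F (L.F i) < i + L.m)
    (hσ : ∀ v, v ∈ ClosedNbhd G (σ v))
    (hσ' : ∀ u v, u ∈ ClosedNbhd G (σ v) ↔ v ∈ ClosedNbhd G (σ u)) (v : V) :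
    ClosedNbhd G (σ v) = ClosedNbhd G v := by
  obtain ⟨s, hs⟩ := L.exists_isLift hF hσ
  obtain ⟨i, rfl⟩ := L.vert_surjective v
  ext w
  rw [← not_iff_not, ← (hs i).1, L.not_mem_closedNbhd_iff, L.not_mem_closedNbhd_iff]
  simp only [(hs.preservesFar hσ').far_apply_iff L.m_pos L.monotone hF]

end RoundLift

/-! ### Unrolling a proper circular-arc model -/

section ZMod

variable {n : ℕ}

theorem setOf_eq_add_natCast_eq_image_Ico {a : ZMod n} {x : ℤ} (hx : (x : ZMod n) = a) (k : ℕ) :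
    {y : ZMod n | ∃ i : ℕ, i < k ∧ y = a + i} = (↑) '' Ico x (x + k) := by
  ext y
  constructor
  · rintro ⟨i, hi, rfl⟩
    exact ⟨x + i, ⟨by lia, by lia⟩, by simp [hx]⟩
  · rintro ⟨z, ⟨hxz, hzx⟩, rfl⟩
    obtain ⟨i, rfl⟩ := Int.le.dest hxz
    exact ⟨i, by lia, by simp [hx]⟩

theorem exists_intCast_eq_of_inter_nonempty {x y : ℤ} {k l : ℕ}
    (h : ((↑) '' Ico x (x + k) ∩ (↑) '' Ico y (y + l) : Set (ZMod n)).Nonempty) :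
    ∃ z : ℤ, (z : ZMod n) = y ∧ x < z + l ∧ z < x + k := by
  obtain ⟨_, ⟨a, ⟨hxa, hax⟩, rfl⟩, ⟨b, ⟨hyb, hby⟩, hab⟩⟩ := h
  exact ⟨y + (a - b), by simp [hab], by lia, by lia⟩

theorem image_Ico_inter_nonempty {x y : ℤ} {k l : ℕ} (hk : 0 < k) (hl : 0 < l)
    (hxy : x < y + l) (hyx : y < x + k) :
    ((↑) '' Ico x (x + k) ∩ (↑) '' Ico y (y + l) : Set (ZMod n)).Nonempty :=
  ⟨(max x y : ℤ), ⟨_, ⟨le_max_left x y, by lia⟩, rfl⟩, ⟨_, ⟨le_max_right x y, by lia⟩, rfl⟩⟩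

end ZMod

/-- A proper circular-arc model of `G` pulled back to the universal cover `ℤ` of the circle
`ZMod n`: the lifts of the arc of `v` are the intervals `[x, x + len v)` for the lifts `x` of
`start v`. -/
structure ArcLift {V : Type*} (G : SimpleGraph V) where
  /-- the circumference of the circle -/
  n : ℕ
  /-- the starting point of the arc of a vertex -/
  start : V → ZMod n
  /-- the number of points of the arc of a vertex -/
  len : V → ℕ
  n_pos : 0 < n
  len_pos : ∀ v, 0 < len v
  eq_of_Ico_subset : ∀ {u v} {x y : ℤ}, x = start u → y = start v →
    Ico y (y + len v) ⊆ Ico x (x + len u) → u = v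
  mem_closedNbhd_iff : ∀ {u v} {x : ℤ}, x = start u → (v ∈ ClosedNbhd G u ↔
    ∃ y : ℤ, y = start v ∧ x < y + len v ∧ y < x + len u)

theorem IsPCAGraph.nonempty_arcLift {V : Type*} {G : SimpleGraph V} (hG : IsPCAGraph G) :
    Nonempty (ArcLift G) := by
  obtain ⟨n, hn, l, -, harc, hproper, hadj⟩ := hG
  choose hne start len _ hl using harc
  have hlen (v : V) : 0 < len v := by
    obtain ⟨_, hx⟩ := hne v
    rw [hl] at hx
    exact (Nat.zero_le _).trans_lt hx.choose_spec.1
  have hl' {v : V} {x : ℤ} (hx : x = start v) : l v = (↑) '' Ico x (x + len v) :=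
    (hl v).trans (setOf_eq_add_natCast_eq_image_Ico hx _)
  refine ⟨⟨n, start, len, hn, hlen, fun {u v x y} hx hy h => ?_, fun {u v x} hx => ?_⟩⟩
  · by_contra huv
    exact hproper v u (Ne.symm huv) (hl' hx ▸ hl' hy ▸ image_mono h)
  · have hmem : v ∈ ClosedNbhd G u ↔ (l u ∩ l v).Nonempty := by
      rcases eq_or_ne v u with rfl | hvu
      · simpa using iff_of_true (mem_closedNbhd_self G v) (hne v)
      · rw [inter_comm, ← hadj v u hvu]
        exact or_iff_right hvu
    obtain ⟨y, hy⟩ := ZMod.intCast_surjective (start v)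
    rw [hmem, hl' hx]
    constructor
    · intro h
      rw [hl' hy] at h
      simpa only [hy] using exists_intCast_eq_of_inter_nonempty h
    · rintro ⟨z, hz, hxz, hzx⟩
      rw [hl' hz]
      exact image_Ico_inter_nonempty (hlen u) (hlen v) hxz hzx

namespace ArcLift

variable {V : Type*} {G : SimpleGraph V} (M : ArcLift G)

theorem start_injective : Function.Injective M.start := by
  intro u v huv
  obtain ⟨x, hx⟩ := ZMod.intCast_surjective (M.start u)
  rcases le_total (M.len v) (M.len u) with h | h
  · exact M.eq_of_Ico_subset hx (hx.trans huv) (Ico_subset_Ico_right (by lia))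
  · exact (M.eq_of_Ico_subset (hx.trans huv) hx (Ico_subset_Ico_right (by lia))).symm

theorem exists_strictMono_range_eq_preimage [Nonempty V] :
    ∃ m, 0 < m ∧ ∃ p : ℤ →+c[m, (M.n : ℤ)] ℤ, StrictMono p ∧
      range p = (↑) ⁻¹' range M.start := by
  refine exists_strictMono_range_eq (mod_cast M.n_pos) ?_ fun x => by simp
  exact (range_nonempty M.start).preimage ZMod.intCast_surjective

section Enumeration

variable {M} {m : ℤ} {p : ℤ →+c[m, (M.n : ℤ)] ℤ} {vert : ℤ → V}

theorem vert_eq_iff (hp : StrictMono p) (hvert : ∀ i, p i = M.start (vert i)) {i j : ℤ} :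
    vert i = vert j ↔ i ≡ j [ZMOD m] := by
  rw [← M.start_injective.eq_iff, ← hvert, ← hvert, ZMod.intCast_eq_intCast_iff,
    modEq_apply_iff hp.injective]

theorem monotone_add_len (hp : StrictMono p) (hvert : ∀ i, p i = M.start (vert i)) :
    Monotone fun i => p i + M.len (vert i) := by
  intro i j hij
  have hpij : p i ≤ p j := hp.monotone hij
  by_contra! h
  have heq : vert i = vert j :=
    M.eq_of_Ico_subset (hvert i) (hvert j) (Ico_subset_Ico hpij h.le)
  simp only [heq] at h
  lia

theorem mem_closedNbhd_vert_iff (hvert : ∀ i, p i = M.start (vert i))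
    (hrange : range p = (↑) ⁻¹' range M.start) {i : ℤ} {v : V} : v ∈ ClosedNbhd G (vert i) ↔
      ∃ j, vert j = v ∧ p i < p j + M.len (vert j) ∧ p j < p i + M.len (vert i) := by
  rw [M.mem_closedNbhd_iff (hvert i)]
  constructor
  · rintro ⟨y, hy, h⟩
    obtain ⟨j, rfl⟩ : y ∈ range p := hrange ▸ ⟨v, hy.symm⟩
    obtain rfl : vert j = v := M.start_injective ((hvert j).symm.trans hy)
    exact ⟨j, rfl, h⟩
  · rintro ⟨j, rfl, h⟩
    exact ⟨p j, hvert j, h⟩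

end Enumeration

theorem nonempty_roundLift [Nonempty V] (M : ArcLift G) : Nonempty (RoundLift G) := by
  obtain ⟨m, hm, p, hp, hrange⟩ := M.exists_strictMono_range_eq_preimage
  have hstart (i : ℤ) : (p i : ZMod M.n) ∈ range M.start := hrange.subset (mem_range_self i)
  choose vert hvert using hstart
  replace hvert (i : ℤ) : p i = M.start (vert i) := (hvert i).symm
  have hvert_surj : Function.Surjective vert := fun v => by
    obtain ⟨x, hx⟩ := ZMod.intCast_surjective (M.start v)
    obtain ⟨i, rfl⟩ : x ∈ range p := hrange ▸ ⟨v, hx.symm⟩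
    exact ⟨i, M.start_injective ((hvert i).symm.trans hx)⟩
  let e : ℤ →+c[m, (M.n : ℤ)] ℤ := ⟨fun i => p i + M.len (vert i), fun i => by
    rw [AddConstMapClass.map_add_const, (vert_eq_iff hp hvert).2 Int.add_modEq_right,
      add_right_comm]⟩
  obtain ⟨F, hF⟩ := exists_forall_lt_apply_iff (mod_cast M.n_pos) hp.monotone e
  refine ⟨⟨m, F, vert, hm, fun i j hij => ?_, fun i => ?_, hvert_surj, vert_eq_iff hp hvert, ?_⟩⟩
  · exact le_of_forall_lt fun k hk =>
      (hF j k).2 (((hF i k).1 hk).trans_le (monotone_add_len hp hvert hij))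
  · exact (hF i i).2 (lt_add_of_pos_right _ (mod_cast M.len_pos (vert i)))
  · intro i v
    simp only [Near, hF]
    exact mem_closedNbhd_vert_iff hvert hrange

end ArcLift

/-- A proper circular-arc graph `G` with non-bipartite complement is
exactly reconstructible from its closed neighborhood hypergraph: if `H` is any graph
on the same vertex set with `N_H[v] = N_G[σ(v)]` for a permutation `σ`, then `H = G`. -/
theorem stmt18 {V : Type*} [Fintype V] (G H : SimpleGraph V)
    (hG : IsPCAGraph G) (hnb : ¬ IsBipartite Gᶜ) (σ : Equiv.Perm V)
    (h : ∀ v, ClosedNbhd H v = ClosedNbhd G (σ v)) :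
    H = G := by
  rcases isEmpty_or_nonempty V with _ | _
  · exact Subsingleton.elim H G
  obtain ⟨M⟩ := hG.nonempty_arcLift
  obtain ⟨L⟩ := M.nonempty_roundLift
  have hF (i : ℤ) : L.F (L.F i) < i + L.m := not_le.1 fun hi => hnb (L.isBipartite_compl hi)
  have hσ (v : V) : v ∈ ClosedNbhd G (σ v) := h v ▸ mem_closedNbhd_self H v
  have hσ' (u v : V) : u ∈ ClosedNbhd G (σ v) ↔ v ∈ ClosedNbhd G (σ u) := by
    rw [← h, ← h, mem_closedNbhd_comm]
  exact closedNbhd_injective (funext fun v => (h v).trans (L.closedNbhd_apply_eq hF hσ hσ' v))
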